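/- For all positive integers d and n with d + 1 ≤ n ≤ 2^d, there exists a 0/1-polytope P ⊆ ℝ^d of dimension d with exactly n vertices such that P has at most (d + 4)·n edges (1-dimensional faces) and the graph of P has edge expansion at least one: for every subset S of the vertex set of P with 0 < |S| and 2·|S| ≤ n, the number of edges of P having exactly one endpoint in S is at least |S|. -/

import Mathlib

/-!
The vertices are encoded by natural numbers via their binary digits. Choose `k ≤ d` minimal with
`n ≤ 2 ^ k + (d - k)` and put `N = n - (d - k)`, so that `2 ^ (k - 1) < N ≤ 2 ^ k` (with `N = 1`
for `k = 0`). The polytope is the convex hull of the points with codes `0, …, N - 1` (a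
revlex-initial 0/1-polytope of dimension `k`) and of the `d - k` unit vectors in the remaining
directions, that is, an iterated pyramid over the revlex-initial polytope.

*Number of edges.* If `p, q` span an edge, then no other pair of vertices has the same sum
(`edge_classify`), so `(p, q)` is an irreducible pair. Splitting off the lowest binary digit,
the number `E N` of irreducible pairs in `{0, …, N - 1}` satisfies
`E N ≤ E ⌈N/2⌉ + E ⌊N/2⌋ + N`, whence `E N ≤ k * N` for `N ≤ 2 ^ k` (`card_irrPairs`). The edges
at the apices number at most `(d - k) * n`, so there are at most `d * n` edges altogether.

*Expansion.* If there is an apex, it is adjacent to all other vertices, and its edges alone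
suffice. Otherwise the vertices are an initial segment of the cube, and the cube edges inside
it suffice: the lowest digit splits the segment into two initial segments of sizes `⌈N/2⌉` and
`⌊N/2⌋` joined by a matching, and induction applies (`min_le_card_cut`). That these pairs are
edges is shown by explicit supporting hyperplanes (`edge_face`).
-/

open Finset

/-- The set of 0/1-vectors in ℝ^d. -/
def ZeroOne (d : ℕ) : Set (Fin d → ℝ) := {x | ∀ i, x i = 0 ∨ x i = 1}

/-- `x` is reverse-lexicographically smaller than `y`:
there is an index `m` with `x m < y m` and `x i = y i` for all `i > m`
(equivalently, `x m < y m` for `m` the largest index where `x` and `y` differ). -/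
def RlexLt {d : ℕ} (x y : Fin d → ℝ) : Prop :=
  ∃ m : Fin d, x m < y m ∧ ∀ i : Fin d, m < i → x i = y i

/-- `X(v)`: the 0/1-points revlex-smaller than `v`. -/
def Xset {d : ℕ} (v : Fin d → ℝ) : Set (Fin d → ℝ) :=
  {x | x ∈ ZeroOne d ∧ RlexLt x v}

/-- The revlex-initial 0/1-polytope `P(v) = conv X(v)`. -/
noncomputable def Pset {d : ℕ} (v : Fin d → ℝ) : Set (Fin d → ℝ) :=
  convexHull ℝ (Xset v)

/-- `Sig(v)`: the support of `v` (the indices of its one-entries). -/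
noncomputable def Sig {d : ℕ} (v : Fin d → ℝ) : Finset (Fin d) :=
  @Finset.filter (Fin d) (fun i => v i = 1) (Classical.decPred _) Finset.univ

/-- `Sig_{>i}(v)`: the elements of `Sig(v)` above `i`. -/
noncomputable def SigGt {d : ℕ} (v : Fin d → ℝ) (i : Fin d) : Finset (Fin d) :=
  (Sig v).filter (fun j => i < j)

/-- The dimension of the affine hull of a set in ℝ^d. -/
noncomputable def adim {d : ℕ} (s : Set (Fin d → ℝ)) : ℕ :=
  Module.finrank ℝ (affineSpan ℝ s).direction

/-- A face of a polytope: a convex extreme subset. -/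
def IsFaceOf {d : ℕ} (P F : Set (Fin d → ℝ)) : Prop :=
  Convex ℝ F ∧ IsExtreme ℝ P F

/-- The number of indices satisfying a predicate. -/
noncomputable def cnt {d : ℕ} (p : Fin d → Prop) : ℕ :=
  (@Finset.filter (Fin d) p (Classical.decPred _) Finset.univ).card

/-- The 0/1-vector in ℝ^d whose coordinates are the `d` lowest binary digits of `p`
(the digit of weight `2 ^ i` in position `i`). -/
noncomputable def enc (d p : ℕ) : Fin d → ℝ := fun i => if p.testBit i then 1 else 0

/-- `(p', q')` arises from `(p, q)` by exchanging the binary digits of `p` and `q` in some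
set of positions; equivalently, the digit vectors have the same sum. -/
def Swap (p q p' q' : ℕ) : Prop :=
  ∀ i, (p'.testBit i = p.testBit i ∧ q'.testBit i = q.testBit i) ∨
    (p'.testBit i = q.testBit i ∧ q'.testBit i = p.testBit i)

/-- `p < q` and no pair from `C` other than `{p, q}` itself has the same digit-vector sum.
This is a necessary condition for `p, q` to span an edge of the polytope with vertices `C`. -/
def Irr (C : Finset ℕ) (p q : ℕ) : Prop :=
  p < q ∧ ∀ p' ∈ C, ∀ q' ∈ C, Swap p q p' q' → p' = p ∨ p' = q

/-- Adjacency in the cube graph: the binary expansions differ in exactly one position. -/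
def Adj (p q : ℕ) : Prop := ∃ i, ∀ j, p.testBit j = q.testBit j ↔ j ≠ i

/-! ### Counting irreducible pairs -/

lemma swap_double {p q p' q' a b a' b' e f : ℕ} (h : Swap p q p' q')
    (ha : a = 2 * p + e) (hb : b = 2 * q + f) (he : e < 2) (hf : f < 2)
    (h' : (a' = 2 * p' + e ∧ b' = 2 * q' + f) ∨ (a' = 2 * p' + f ∧ b' = 2 * q' + e)) :
    Swap a b a' b' := by
  intro i
  cases i with
  | zero =>
    simp only [Nat.testBit_zero]
    have : (a' % 2 = a % 2 ∧ b' % 2 = b % 2) ∨ (a' % 2 = b % 2 ∧ b' % 2 = a % 2) := by omega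
    rcases this with ⟨h1, h2⟩ | ⟨h1, h2⟩ <;> simp [h1, h2]
  | succ i =>
    simp only [Nat.testBit_succ]
    have h1 : a / 2 = p := by omega
    have h2 : b / 2 = q := by omega
    have h3 : a' / 2 = p' := by omega
    have h4 : b' / 2 = q' := by omega
    rw [h1, h2, h3, h4]
    exact h i

lemma swap_refl (p q : ℕ) : Swap p q p q := fun _ => Or.inl ⟨rfl, rfl⟩

open Classical in
/-- The irreducible pairs of the initial segment `{0, …, N - 1}`. -/
noncomputable def irrPairs (N : ℕ) : Finset (ℕ × ℕ) :=
  (range N ×ˢ range N).filter (fun x => Irr (range N) x.1 x.2)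

/-- Splitting by the lowest digit: pairs of equal parity come from the two halves. A pair of
different parity that does not differ in the lowest digit only allows the exchange of the lowest
digits, unless this leaves the segment, which forces its larger element to be `N - 1`. -/
lemma irrPairs_subset (N : ℕ) : irrPairs N ⊆
    (((irrPairs ((N + 1) / 2)).image (fun x => (2 * x.1, 2 * x.2)) ∪
      (irrPairs (N / 2)).image (fun x => (2 * x.1 + 1, 2 * x.2 + 1))) ∪
      (range (N / 2)).image (fun t => (2 * t, 2 * t + 1))) ∪
      (range (N / 2)).image (fun t => (2 * t + 1, N - 1)) := by
  classical
  rintro ⟨p, q⟩ h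
  simp only [irrPairs, Irr, mem_filter, mem_product, mem_range] at h
  obtain ⟨⟨hp, hq⟩, hpq, hI⟩ := h
  simp only [irrPairs, Irr, mem_union, mem_image, mem_filter, mem_product, mem_range,
    Prod.mk.injEq, Prod.exists]
  rcases Nat.mod_two_eq_zero_or_one p with p0 | p0 <;>
    rcases Nat.mod_two_eq_zero_or_one q with q0 | q0
  · refine Or.inl (Or.inl (Or.inl ⟨p / 2, q / 2, ⟨⟨by omega, by omega⟩, by omega, ?_⟩,
      by omega, by omega⟩))
    intro p' hp' q' hq' hs
    have := hI (2 * p') (by omega) (2 * q') (by omega)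
      (swap_double (e := 0) (f := 0) hs (by omega) (by omega) (by omega) (by omega) (by omega))
    omega
  · by_cases hh : p / 2 = q / 2
    · exact Or.inl (Or.inr ⟨p / 2, by omega, by omega, by omega⟩)
    · have := hI (p + 1) (by omega) (q - 1) (by omega)
        (swap_double (e := 0) (f := 1) (swap_refl (p / 2) (q / 2))
          (by omega) (by omega) (by omega) (by omega) (by omega))
      omega
  · by_cases hN : q + 1 < N
    · have := hI (p - 1) (by omega) (q + 1) (by omega)
        (swap_double (e := 1) (f := 0) (swap_refl (p / 2) (q / 2))
          (by omega) (by omega) (by omega) (by omega) (by omega))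
      omega
    · exact Or.inr ⟨p / 2, by omega, by omega, by omega⟩
  · refine Or.inl (Or.inl (Or.inr ⟨p / 2, q / 2, ⟨⟨by omega, by omega⟩, by omega, ?_⟩,
      by omega, by omega⟩))
    intro p' hp' q' hq' hs
    have := hI (2 * p' + 1) (by omega) (2 * q' + 1) (by omega)
      (swap_double (e := 1) (f := 1) hs (by omega) (by omega) (by omega) (by omega) (by omega))
    omega

lemma card_irrPairs (k : ℕ) : ∀ N, N ≤ 2 ^ k → (irrPairs N).card ≤ k * N := by
  classical
  induction k with
  | zero =>
    intro N hN
    have : irrPairs N = ∅ := by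
      apply Finset.eq_empty_of_forall_notMem
      rintro ⟨p, q⟩ h
      simp only [irrPairs, Irr, mem_filter, mem_product, mem_range] at h
      omega
    simp [this]
  | succ k ih =>
    intro N hN
    rw [pow_succ] at hN
    have h1 := ih ((N + 1) / 2) (by omega)
    have h2 := ih (N / 2) (by omega)
    have h3 := card_le_card (irrPairs_subset N)
    have h4 := h3.trans ((card_union_le _ _).trans (Nat.add_le_add
      ((card_union_le _ _).trans (Nat.add_le_add
      ((card_union_le _ _).trans (Nat.add_le_add card_image_le card_image_le))
      card_image_le)) card_image_le))
    simp only [card_range] at h4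
    have h5 : (N + 1) / 2 + N / 2 = N := by omega
    have h6 : k * ((N + 1) / 2) + k * (N / 2) = k * N := by rw [← mul_add, h5]
    have h7 : (k + 1) * N = k * N + N := by ring
    omega

/-! ### Expansion of initial segments of the cube graph -/

lemma adj_low (t : ℕ) : Adj (2 * t) (2 * t + 1) := by
  refine ⟨0, fun j => ?_⟩
  cases j with
  | zero => simp
  | succ j =>
    have h1 : 2 * t / 2 = t := by omega
    have h2 : (2 * t + 1) / 2 = t := by omega
    simp [Nat.testBit_succ, h1, h2]

lemma adj_symm {p q : ℕ} (h : Adj p q) : Adj q p := by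
  obtain ⟨i, h⟩ := h
  exact ⟨i, fun j => by rw [← h j, eq_comm]⟩

lemma adj_double {p q : ℕ} (h : Adj p q) (e : ℕ) (he : e < 2) :
    Adj (2 * p + e) (2 * q + e) := by
  obtain ⟨i, h⟩ := h
  refine ⟨i + 1, fun j => ?_⟩
  cases j with
  | zero =>
    have : (2 * p + e) % 2 = (2 * q + e) % 2 := by omega
    simp [Nat.testBit_zero, this]
  | succ j =>
    have h1 : (2 * p + e) / 2 = p := by omega
    have h2 : (2 * q + e) / 2 = q := by omega
    simp [Nat.testBit_succ, h1, h2, h j]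

open Classical in
/-- The cube edges from `S` to its complement in `{0, …, N - 1}`, directed out of `S`. -/
noncomputable def cut (N : ℕ) (S : Finset ℕ) : Finset (ℕ × ℕ) :=
  (S ×ˢ (range N \ S)).filter (fun x => Adj x.1 x.2)

/-- The subgraph of the cube graph induced on an initial segment has edge expansion at least
one. The lowest digit splits the segment into two initial segments of almost equal size, joined
by a matching. If both parts of `S` lie on the same side of their halves, the two cuts suffice;
otherwise the matching contributes the difference of the sizes of the two parts. -/
lemma min_le_card_cut (N : ℕ) : ∀ S ⊆ range N, min S.card (N - S.card) ≤ (cut N S).card := by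
  classical
  induction N using Nat.strong_induction_on with
  | _ N ih =>
    intro S hS
    by_cases hN : N < 2
    · have := card_le_card hS
      rw [card_range] at this
      omega
    push Not at hN
    set S0 := (range ((N + 1) / 2)).filter (fun t => 2 * t ∈ S) with hS0
    set S1 := (range (N / 2)).filter (fun t => 2 * t + 1 ∈ S) with hS1
    have hsub0 : S0 ⊆ range ((N + 1) / 2) := filter_subset _ _
    have hsub1 : S1 ⊆ range (N / 2) := filter_subset _ _
    have i0 := ih ((N + 1) / 2) (by omega) S0 hsub0
    have i1 := ih (N / 2) (by omega) S1 hsub1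
    have hc0 := card_le_card hsub0
    have hc1 := card_le_card hsub1
    rw [card_range] at hc0 hc1
    have hSlt : ∀ x ∈ S, x < N := fun x hx => mem_range.1 (hS hx)
    have hcard : S.card ≤ S0.card + S1.card := by
      have : S ⊆ S0.image (fun t => 2 * t) ∪ S1.image (fun t => 2 * t + 1) := by
        intro x hx
        have := hSlt x hx
        simp only [hS0, hS1, mem_union, mem_image, mem_filter, mem_range]
        rcases Nat.even_or_odd' x with ⟨t, rfl | rfl⟩
        · exact Or.inl ⟨t, ⟨by omega, hx⟩, rfl⟩
        · exact Or.inr ⟨t, ⟨by omega, hx⟩, rfl⟩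
      exact (card_le_card this).trans ((card_union_le _ _).trans
        (Nat.add_le_add card_image_le card_image_le))
    have hcard' : S0.card + S1.card ≤ S.card := by
      have : S0.image (fun t => 2 * t) ∪ S1.image (fun t => 2 * t + 1) ⊆ S := by
        intro x hx
        simp only [hS0, hS1, mem_union, mem_image, mem_filter, mem_range] at hx
        rcases hx with ⟨t, ⟨_, h⟩, rfl⟩ | ⟨t, ⟨_, h⟩, rfl⟩ <;> exact h
      have h2 := card_le_card this
      rw [card_union_of_disjoint, card_image_of_injective, card_image_of_injective] at h2
      · exact h2
      · intro a b h; simp only at h; omega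
      · intro a b h; simp only at h; omega
      · rw [disjoint_left]
        intro x h1 h2
        simp only [mem_image] at h1 h2
        obtain ⟨a, _, rfl⟩ := h1
        obtain ⟨b, _, h⟩ := h2
        omega
    -- the matching edges leaving `S` upwards and downwards
    set M0 := (S0 ∩ range (N / 2)) \ S1 with hM0
    set M1 := S1 \ S0 with hM1
    have hM1c : S1.card ≤ M1.card + S0.card := by
      have := le_card_sdiff S0 S1
      rw [← hM1] at this
      omega
    have hM0c : S0.card ≤ M0.card + S1.card + ((N + 1) / 2 - N / 2) := by
      have h1 := le_card_sdiff S1 (S0 ∩ range (N / 2))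
      rw [← hM0] at h1
      have h2 : S0 ⊆ (S0 ∩ range (N / 2)) ∪ (range ((N + 1) / 2) \ range (N / 2)) := by
        intro x hx
        have := hsub0 hx
        by_cases hx' : x ∈ range (N / 2) <;> simp_all
      have h3 := (card_le_card h2).trans (card_union_le _ _)
      rw [card_sdiff_of_subset (range_subset_range.2 (by omega)), card_range, card_range] at h3
      omega
    have key : (cut ((N + 1) / 2) S0).card + (cut (N / 2) S1).card + M0.card + M1.card
        ≤ (cut N S).card := by
      have hsubset : (((cut ((N + 1) / 2) S0).image (fun x => (2 * x.1, 2 * x.2)) ∪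
          (cut (N / 2) S1).image (fun x => (2 * x.1 + 1, 2 * x.2 + 1))) ∪
          M0.image (fun t => (2 * t, 2 * t + 1))) ∪
          M1.image (fun t => (2 * t + 1, 2 * t)) ⊆ cut N S := by
        rintro ⟨p, q⟩ h
        simp only [cut, hM0, hM1, hS0, hS1, mem_union, mem_image, mem_filter, mem_product,
          mem_sdiff, mem_inter, mem_range, Prod.mk.injEq, Prod.exists] at h
        simp only [cut, mem_filter, mem_product, mem_sdiff, mem_range]
        rcases h with ((⟨a, b, ⟨⟨⟨h1, h2⟩, h3, h4⟩, h5⟩, rfl, rfl⟩ |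
          ⟨a, b, ⟨⟨⟨h1, h2⟩, h3, h4⟩, h5⟩, rfl, rfl⟩) | ⟨t, ⟨⟨⟨h1, h2⟩, h3⟩, h4⟩, rfl, rfl⟩) |
          ⟨t, ⟨⟨h1, h2⟩, h3⟩, rfl, rfl⟩
        · exact ⟨⟨h2, by omega, fun h => h4 ⟨h3, h⟩⟩, adj_double h5 0 (by omega)⟩
        · exact ⟨⟨h2, by omega, fun h => h4 ⟨h3, h⟩⟩, adj_double h5 1 (by omega)⟩
        · exact ⟨⟨h2, by omega, fun h => h4 ⟨h3, h⟩⟩, adj_low t⟩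
        · exact ⟨⟨h2, by omega, fun h => h3 ⟨by omega, h⟩⟩, adj_symm (adj_low t)⟩
      have h2 := card_le_card hsubset
      rw [card_union_of_disjoint, card_union_of_disjoint, card_union_of_disjoint,
        card_image_of_injective, card_image_of_injective, card_image_of_injective,
        card_image_of_injective] at h2
      · exact h2
      · intro a b h; simp only [Prod.mk.injEq] at h; omega
      · intro a b h; simp only [Prod.mk.injEq] at h; omega
      · rintro ⟨a, a'⟩ ⟨b, b'⟩ h
        simp only [Prod.mk.injEq] at h ⊢
        omega
      · rintro ⟨a, a'⟩ ⟨b, b'⟩ h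
        simp only [Prod.mk.injEq] at h ⊢
        omega
      all_goals
        rw [disjoint_left]
        rintro ⟨p, q⟩ h1 h2
        simp only [mem_union, mem_image, Prod.mk.injEq, Prod.exists] at h1 h2
        grind
    omega

/-! ### Faces of 0/1-polytopes -/

lemma enc_mem (d p : ℕ) : enc d p ∈ ZeroOne d := by
  intro i
  unfold enc
  split_ifs <;> simp

lemma enc_apply_eq_iff {d : ℕ} (p q : ℕ) (i : Fin d) :
    enc d p i = enc d q i ↔ p.testBit i = q.testBit i := by
  unfold enc
  cases p.testBit i <;> cases q.testBit i <;> simp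

lemma enc_inj {d p q : ℕ} (hp : p < 2 ^ d) (hq : q < 2 ^ d) (h : enc d p = enc d q) :
    p = q := by
  apply Nat.eq_of_testBit_eq
  intro i
  by_cases hi : i < d
  · exact (enc_apply_eq_iff p q ⟨i, hi⟩).1 (congrFun h _)
  · have hle : 2 ^ d ≤ 2 ^ i := Nat.pow_le_pow_right (by norm_num) (by omega)
    rw [Nat.testBit_lt_two_pow (hp.trans_le hle), Nat.testBit_lt_two_pow (hq.trans_le hle)]

lemma enc_swap {d p q p' q' : ℕ} (h : Swap p q p' q') :
    enc d p' + enc d q' = enc d p + enc d q := by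
  funext i
  simp only [Pi.add_apply, enc]
  rcases h i with ⟨h1, h2⟩ | ⟨h1, h2⟩ <;> rw [h1, h2]
  exact add_comm _ _

/-- Three distinct 0/1-points are never collinear. -/
lemma zeroOne_line {d : ℕ} {a b x : Fin d → ℝ} (ha : a ∈ ZeroOne d) (hb : b ∈ ZeroOne d)
    (hx : x ∈ ZeroOne d) (t : ℝ) (h : x - a = t • (b - a)) : x = a ∨ x = b := by
  by_cases hab : a = b
  · left
    subst hab
    simpa [sub_eq_zero] using h
  obtain ⟨i, hi⟩ := Function.ne_iff.1 hab
  have h1 := congrFun h i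
  simp only [Pi.sub_apply, Pi.smul_apply, smul_eq_mul] at h1
  have ht : t = 0 ∨ t = 1 := by
    rcases ha i with e1 | e1 <;> rcases hb i with e2 | e2 <;> rcases hx i with e3 | e3 <;>
      rw [e1, e2] at hi <;> rw [e1, e2, e3] at h1 <;> (try norm_num at hi) <;> norm_num at h1
    · left; exact h1.symm
    · right; exact h1.symm
    · right; linarith
    · left; exact h1
  rcases ht with rfl | rfl
  · left
    simpa [sub_eq_zero] using h
  · right
    simpa using h

lemma zeroOne_mem_segment {d : ℕ} {a b x : Fin d → ℝ} (ha : a ∈ ZeroOne d)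
    (hb : b ∈ ZeroOne d) (hx : x ∈ ZeroOne d) (h : x ∈ segment ℝ a b) : x = a ∨ x = b := by
  rw [segment_eq_image'] at h
  obtain ⟨t, _, rfl⟩ := h
  exact zeroOne_line ha hb hx t (by simp)

/-- For a 0/1-point `x`, this is the sum of the weights `u j` over the coordinates `j` in which
`x` differs from the 0/1-point `a`. It is an affine function of `x`. -/
noncomputable def dist01 {d : ℕ} (u a x : Fin d → ℝ) : ℝ :=
  ∑ j, u j * (a j + (1 - 2 * a j) * x j)

lemma dist01_comb {d : ℕ} (u a x y : Fin d → ℝ) (s t : ℝ) (h : s + t = 1) :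
    dist01 u a (s • x + t • y) = s * dist01 u a x + t * dist01 u a y := by
  unfold dist01
  rw [mul_sum, mul_sum, ← sum_add_distrib]
  refine sum_congr rfl fun j _ => ?_
  simp only [Pi.add_apply, Pi.smul_apply, smul_eq_mul]
  have : t = 1 - s := by linarith
  subst this
  ring

/-- If a nonnegative affine function on `V` vanishes precisely at `a` and `b`, then it exposes
the segment from `a` to `b`. -/
lemma face_of_dist01 {d : ℕ} {V : Set (Fin d → ℝ)} (u c a b : Fin d → ℝ) (ha : a ∈ V)
    (hb : b ∈ V) (h0 : ∀ x ∈ V, 0 ≤ dist01 u c x) (ha0 : dist01 u c a = 0)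
    (hb0 : dist01 u c b = 0)
    (h1 : ∀ x ∈ V, dist01 u c x = 0 → x = a ∨ x = b) :
    IsFaceOf (convexHull ℝ V) (segment ℝ a b) := by
  have hseg : ∀ x ∈ segment ℝ a b, dist01 u c x = 0 := by
    rintro x ⟨s, t, hs, ht, hst, rfl⟩
    rw [dist01_comb _ _ _ _ _ _ hst, ha0, hb0]
    simp
  have hsub : convexHull ℝ V ⊆ segment ℝ a b ∪ {x | 0 < dist01 u c x} := by
    apply convexHull_min
    · intro x hx
      rcases (h0 x hx).lt_or_eq with h | h
      · exact Or.inr h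
      · rcases h1 x hx h.symm with rfl | rfl
        · exact Or.inl (left_mem_segment ℝ _ _)
        · exact Or.inl (right_mem_segment ℝ _ _)
    · rw [convex_iff_forall_pos]
      rintro x hx y hy s t hs ht hst
      have hx0 : 0 ≤ dist01 u c x := hx.elim (fun h => (hseg x h).ge) (fun h => le_of_lt h)
      have hy0 : 0 ≤ dist01 u c y := hy.elim (fun h => (hseg y h).ge) (fun h => le_of_lt h)
      rcases hx with hx | hx
      · rcases hy with hy | hy
        · exact Or.inl (convex_segment a b hx hy hs.le ht.le hst)
        · refine Or.inr ?_
          simp only [Set.mem_ofPred_eq] at hy ⊢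
          rw [dist01_comb _ _ _ _ _ _ hst]
          have := mul_pos ht hy
          have := mul_nonneg hs.le hx0
          linarith
      · refine Or.inr ?_
        simp only [Set.mem_ofPred_eq] at hx ⊢
        rw [dist01_comb _ _ _ _ _ _ hst]
        have := mul_pos hs hx
        have := mul_nonneg ht.le hy0
        linarith
  have hnn : ∀ x ∈ convexHull ℝ V, 0 ≤ dist01 u c x := fun x hx =>
    (hsub hx).elim (fun h => (hseg x h).ge) (fun h => le_of_lt h)
  refine ⟨convex_segment a b, ?_, ?_⟩
  · exact (convex_convexHull ℝ V).segment_subset (subset_convexHull ℝ V ha)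
      (subset_convexHull ℝ V hb)
  · rintro x hx y hy z hz ⟨s, t, hs, ht, hst, rfl⟩
    have h := hseg _ hz
    rw [dist01_comb _ _ _ _ _ _ hst] at h
    have h2 := mul_nonneg ht.le (hnn y hy)
    have h3 := mul_nonneg hs.le (hnn x hx)
    have h4 : s * dist01 u c x = 0 := by linarith
    have h5 : dist01 u c x = 0 := by
      rcases mul_eq_zero.1 h4 with h | h
      · exact absurd h hs.ne'
      · exact h
    rcases hsub hx with h | h
    · exact h
    · exact absurd h5 (ne_of_gt h)

lemma term_nonneg {a x : ℝ} (ha : a = 0 ∨ a = 1) (hx : x = 0 ∨ x = 1) :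
    0 ≤ a + (1 - 2 * a) * x := by
  rcases ha with rfl | rfl <;> rcases hx with rfl | rfl <;> norm_num

lemma term_zero_iff {a x : ℝ} (ha : a = 0 ∨ a = 1) (hx : x = 0 ∨ x = 1) :
    a + (1 - 2 * a) * x = 0 ↔ x = a := by
  rcases ha with rfl | rfl <;> rcases hx with rfl | rfl <;> norm_num

lemma term_one {a x : ℝ} (ha : a = 0 ∨ a = 1) (hx : x = 0 ∨ x = 1) (h : x ≠ a) :
    a + (1 - 2 * a) * x = 1 := by
  rcases ha with rfl | rfl <;> rcases hx with rfl | rfl <;> first | exact absurd rfl h | norm_num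

/-- Every 0/1-point of `V` is a vertex of the convex hull: it is exposed by the Hamming
distance to it. -/
lemma extremePoints_eq {d : ℕ} {V : Set (Fin d → ℝ)} (hV : V ⊆ ZeroOne d) :
    (convexHull ℝ V).extremePoints ℝ = V := by
  apply Set.Subset.antisymm extremePoints_convexHull_subset
  intro a ha
  have hself : dist01 (fun _ => 1) a a = 0 :=
    sum_eq_zero fun j _ => by rw [(term_zero_iff (hV ha j) (hV ha j)).2 rfl, mul_zero]
  have hnn : ∀ x ∈ V, ∀ j ∈ univ, 0 ≤ (1 : ℝ) * (a j + (1 - 2 * a j) * x j) := fun x hx j _ => by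
    rw [one_mul]; exact term_nonneg (hV ha j) (hV hx j)
  have := face_of_dist01 (V := V) (fun _ => 1) a a a ha ha
    (fun x hx => sum_nonneg (hnn x hx)) hself hself (by
      intro x hx h
      left
      funext j
      have := (sum_eq_zero_iff_of_nonneg (hnn x hx)).1 h j (mem_univ j)
      rw [one_mul] at this
      exact (term_zero_iff (hV ha j) (hV hx j)).1 this)
  rw [segment_same] at this
  exact isExtreme_singleton.1 this.2

/-- Two 0/1-points of `V` that differ in coordinate `i` span an edge if they agree in all other
coordinates, or if `b` is the only point of `V` whose `i`-th coordinate differs from that of `a`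
(so that `b` is the apex of a pyramid). -/
lemma edge_face {d : ℕ} {V : Set (Fin d → ℝ)} (hV : V ⊆ ZeroOne d) {a b : Fin d → ℝ}
    (ha : a ∈ V) (hb : b ∈ V) (i : Fin d) (hi : b i ≠ a i)
    (H : (∀ j, j ≠ i → b j = a j) ∨ (∀ x ∈ V, x i ≠ a i → x = b)) :
    IsFaceOf (convexHull ℝ V) (segment ℝ a b) := by
  classical
  -- the negative weight at `i` lowers the value at `b` to zero; it vanishes for a cube edge
  set c : ℝ := ∑ j ∈ univ.erase i, (a j + (1 - 2 * a j) * b j) with hc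
  set u : Fin d → ℝ := fun j => if j = i then -c else 1 with hu
  have hdist : ∀ x, dist01 u a x = -c * (a i + (1 - 2 * a i) * x i) +
      ∑ j ∈ univ.erase i, (a j + (1 - 2 * a j) * x j) := by
    intro x
    unfold dist01
    rw [← add_sum_erase _ _ (mem_univ i)]
    congr 1
    · simp [hu]
    · refine sum_congr rfl fun j hj => ?_
      simp [hu, (mem_erase.1 hj).1]
  have hnn : ∀ x ∈ V, ∀ j ∈ univ.erase i, 0 ≤ a j + (1 - 2 * a j) * x j :=
    fun x hx j _ => term_nonneg (hV ha j) (hV hx j)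
  have hb0 : dist01 u a b = 0 := by
    rw [hdist, term_one (hV ha i) (hV hb i) hi, ← hc]
    ring
  have ha0 : dist01 u a a = 0 := by
    refine sum_eq_zero fun j _ => ?_
    rw [(term_zero_iff (hV ha j) (hV ha j)).2 rfl, mul_zero]
  -- if the weight at `i` does not matter, the value is the Hamming distance off `i`
  have hred : ∀ x ∈ V, x ≠ b → dist01 u a x = ∑ j ∈ univ.erase i,
      (a j + (1 - 2 * a j) * x j) := by
    intro x hx hxb
    rw [hdist]
    by_cases hxi : x i = a i
    · rw [(term_zero_iff (hV ha i) (hV hx i)).2 hxi]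
      ring
    · rcases H with H | H
      · have : c = 0 := sum_eq_zero fun j hj =>
          (term_zero_iff (hV ha j) (hV hb j)).2 (H j (mem_erase.1 hj).1)
        rw [this]
        ring
      · exact absurd (H x hx hxi) hxb
  refine face_of_dist01 u a a b ha hb ?_ ha0 hb0 ?_
  · intro x hx
    by_cases hxb : x = b
    · rw [hxb, hb0]
    · rw [hred x hx hxb]
      exact sum_nonneg (hnn x hx)
  · intro x hx h
    by_cases hxb : x = b
    · exact Or.inr hxb
    left
    rw [hred x hx hxb] at h
    have h2 := (sum_eq_zero_iff_of_nonneg (hnn x hx)).1 h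
    have h3 : ∀ j, j ≠ i → x j = a j := fun j hj =>
      (term_zero_iff (hV ha j) (hV hx j)).1 (h2 j (mem_erase.2 ⟨hj, mem_univ j⟩))
    by_cases hxi : x i = a i
    · funext j
      by_cases hj : j = i
      · rw [hj, hxi]
      · exact h3 j hj
    · exfalso
      apply hxb
      rcases H with H | H
      · funext j
        by_cases hj : j = i
        · subst hj
          rcases hV ha j with e1 | e1 <;> rcases hV hb j with e2 | e2 <;>
            rcases hV hx j with e3 | e3 <;> simp_all
        · rw [h3 j hj, H j hj]
      · exact H x hx hxi

lemma adim_convexHull {d : ℕ} (V : Set (Fin d → ℝ)) :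
    adim (convexHull ℝ V) = Module.finrank ℝ (vectorSpan ℝ V) := by
  unfold adim
  rw [affineSpan_convexHull, direction_affineSpan]

lemma adim_segment {d : ℕ} {a b : Fin d → ℝ} (h : a ≠ b) : adim (segment ℝ a b) = 1 := by
  rw [← convexHull_pair, adim_convexHull, vectorSpan_pair_rev]
  exact finrank_span_singleton (by simpa [sub_eq_zero] using h.symm)

/-- A face of a polytope is the convex hull of the vertices it contains. -/
lemma face_eq {d : ℕ} {V F : Set (Fin d → ℝ)} (hF : IsFaceOf (convexHull ℝ V) F) :
    F = convexHull ℝ (F ∩ V) := by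
  apply Set.Subset.antisymm
  · have hsub : convexHull ℝ V ⊆ convexHull ℝ (F ∩ V) ∪ (convexHull ℝ V \ F) := by
      apply convexHull_min
      · intro x hx
        by_cases hxF : x ∈ F
        · exact Or.inl (subset_convexHull ℝ _ ⟨hxF, hx⟩)
        · exact Or.inr ⟨subset_convexHull ℝ _ hx, hxF⟩
      · have hin : convexHull ℝ (F ∩ V) ⊆ convexHull ℝ V :=
          convexHull_mono Set.inter_subset_right
        have hall : ∀ x ∈ convexHull ℝ (F ∩ V) ∪ (convexHull ℝ V \ F), x ∈ convexHull ℝ V :=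
          fun x hx => hx.elim (fun h => hin h) (fun h => h.1)
        rw [convex_iff_forall_pos]
        intro x hx y hy s t hs ht hst
        by_cases hz : s • x + t • y ∈ F
        · have hxF := hF.2.2 (hall x hx) (hall y hy) hz ⟨s, t, hs, ht, hst, rfl⟩
          have hyF := hF.2.2 (hall y hy) (hall x hx) hz
            ⟨t, s, ht, hs, by rw [add_comm]; exact hst, add_comm _ _⟩
          have hx' := hx.resolve_right (fun h => h.2 hxF)
          have hy' := hy.resolve_right (fun h => h.2 hyF)
          exact Or.inl (convex_convexHull ℝ _ hx' hy' hs.le ht.le hst)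
        · exact Or.inr ⟨convex_convexHull ℝ V (hall x hx) (hall y hy) hs.le ht.le hst, hz⟩
    intro x hx
    exact (hsub (hF.2.1 hx)).resolve_right (fun h => h.2 hx)
  · exact convexHull_min Set.inter_subset_left hF.1

/-- Every edge joins an irreducible pair of vertices: the midpoint of the edge is the midpoint
of every pair of vertices with the same sum, and such a pair lies in the edge by extremality. -/
lemma edge_classify {d : ℕ} {C : Finset ℕ} (hC : ∀ p ∈ C, p < 2 ^ d) {F : Set (Fin d → ℝ)}
    (hF : IsFaceOf (convexHull ℝ (enc d '' (C : Set ℕ))) F) (h1 : adim F = 1) :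
    ∃ p ∈ C, ∃ q ∈ C, Irr C p q ∧ F = segment ℝ (enc d p) (enc d q) := by
  set V := enc d '' (C : Set ℕ) with hVdef
  have hV : V ⊆ ZeroOne d := by
    rintro _ ⟨p, _, rfl⟩
    exact enc_mem d p
  have hFeq := face_eq hF
  rw [hFeq, adim_convexHull] at h1
  have hnt : (F ∩ V).Nontrivial := by
    by_contra hcon
    rw [Set.not_nontrivial_iff] at hcon
    rw [vectorSpan_of_subsingleton ℝ hcon, finrank_bot] at h1
    exact absurd h1 (by norm_num)
  obtain ⟨a, ha, b, hb, hab⟩ := hnt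
  have hmem : ∀ x ∈ F ∩ V, x = a ∨ x = b := by
    intro x hx
    have hba : (⟨b - a, vsub_mem_vectorSpan ℝ hb ha⟩ : vectorSpan ℝ (F ∩ V)) ≠ 0 := by
      intro h
      exact hab (sub_eq_zero.1 (congrArg Subtype.val h)).symm
    obtain ⟨t, ht⟩ := (finrank_eq_one_iff_of_nonzero' _ hba).1 h1
      ⟨x - a, vsub_mem_vectorSpan ℝ hx ha⟩
    exact zeroOne_line (hV ha.2) (hV hb.2) (hV hx.2) t (congrArg Subtype.val ht).symm
  have hpair : F ∩ V = {a, b} := by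
    ext x
    refine ⟨hmem x, ?_⟩
    rintro (rfl | rfl) <;> assumption
  rw [hpair, convexHull_pair] at hFeq
  have main : ∀ p ∈ C, ∀ q ∈ C, p < q → F = segment ℝ (enc d p) (enc d q) →
      (∀ x ∈ F ∩ V, x = enc d p ∨ x = enc d q) →
      ∃ p ∈ C, ∃ q ∈ C, Irr C p q ∧ F = segment ℝ (enc d p) (enc d q) := by
    intro p hp q hq hpq hFs hm
    refine ⟨p, hp, q, hq, ⟨hpq, ?_⟩, hFs⟩
    intro p' hp' q' hq' hs
    have hsum := enc_swap (d := d) hs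
    have hp'V : enc d p' ∈ V := ⟨p', hp', rfl⟩
    have hq'V : enc d q' ∈ V := ⟨q', hq', rfl⟩
    have hmid : (1 / 2 : ℝ) • enc d p + (1 / 2 : ℝ) • enc d q ∈ F := by
      rw [hFs]
      exact ⟨1 / 2, 1 / 2, by norm_num, by norm_num, by norm_num, rfl⟩
    have hp'F : enc d p' ∈ F := hF.2.2 (subset_convexHull ℝ _ hp'V)
      (subset_convexHull ℝ _ hq'V) hmid
      ⟨1 / 2, 1 / 2, by norm_num, by norm_num, by norm_num, by
        rw [← smul_add, ← smul_add, hsum]⟩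
    rcases hm _ ⟨hp'F, hp'V⟩ with h | h
    · exact Or.inl (enc_inj (hC _ hp') (hC _ hp) h)
    · exact Or.inr (enc_inj (hC _ hp') (hC _ hq) h)
  obtain ⟨p, hp, rfl⟩ := ha.2
  obtain ⟨q, hq, rfl⟩ := hb.2
  rcases lt_trichotomy p q with h | h | h
  · exact main p hp q hq h hFeq hmem
  · exact absurd (congrArg (enc d) h) hab
  · exact main q hq p hp h (by rw [segment_symm]; exact hFeq) (fun x hx => (hmem x hx).symm)

/-! ### The construction -/

/-- The vertex codes: an initial segment of length `N`, spanning a `k`-dimensional polytope when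
`2 ^ (k - 1) < N ≤ 2 ^ k`, and the codes of the unit vectors in the remaining `d - k` directions,
over which iterated pyramids are formed. -/
def codes (d k N : ℕ) : Finset ℕ := range N ∪ (Ico k d).image (fun j => 2 ^ j)

lemma codes_lt {d k N : ℕ} (hkd : k ≤ d) (hN : N ≤ 2 ^ k) : ∀ p ∈ codes d k N, p < 2 ^ d := by
  intro p hp
  simp only [codes, mem_union, mem_range, mem_image, mem_Ico] at hp
  rcases hp with h | ⟨j, ⟨_, h⟩, rfl⟩
  · exact h.trans_le (hN.trans (Nat.pow_le_pow_right (by norm_num) hkd))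
  · exact Nat.pow_lt_pow_right (by norm_num) h

lemma card_codes {d k N : ℕ} (hN : N ≤ 2 ^ k) : (codes d k N).card = N + (d - k) := by
  unfold codes
  rw [card_union_of_disjoint, card_range, card_image_of_injective, Nat.card_Ico]
  · exact Nat.pow_right_injective (le_refl 2)
  · rw [disjoint_left]
    intro x h1 h2
    simp only [mem_range, mem_image, mem_Ico] at h1 h2
    obtain ⟨j, ⟨hj, _⟩, rfl⟩ := h2
    have := Nat.pow_le_pow_right (n := 2) (by norm_num) hj
    omega

lemma exists_params {d n : ℕ} (h1 : d + 1 ≤ n) (h2 : n ≤ 2 ^ d) :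
    ∃ k N, k ≤ d ∧ N + (d - k) = n ∧ 0 < N ∧ N ≤ 2 ^ k ∧ ∀ j < k, 2 ^ j < N := by
  classical
  have hex : ∃ k, n ≤ 2 ^ k + (d - k) := ⟨d, by omega⟩
  have hkd : Nat.find hex ≤ d := Nat.find_min' hex (by omega)
  have hk := Nat.find_spec hex
  have hmin : ∀ m < Nat.find hex, ¬ n ≤ 2 ^ m + (d - m) := fun m hm => Nat.find_min hex hm
  generalize Nat.find hex = k at *
  refine ⟨k, n - (d - k), hkd, by omega, by omega, by omega, ?_⟩
  intro j hj
  have := hmin (k - 1) (by omega)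
  have := Nat.pow_le_pow_right (n := 2) (by norm_num) (show j ≤ k - 1 by omega)
  omega

/-- The points with these codes include the origin and all unit vectors. -/
lemma adim_codes {d k N : ℕ} (hN : 0 < N) (hlt : ∀ j < k, 2 ^ j < N) :
    adim (convexHull ℝ (enc d '' (codes d k N : Set ℕ))) = d := by
  classical
  rw [adim_convexHull]
  have hmem : ∀ i : Fin d, 2 ^ (i : ℕ) ∈ codes d k N := by
    intro i
    simp only [codes, mem_union, mem_range, mem_image, mem_Ico]
    by_cases h : (i : ℕ) < k
    · exact Or.inl (hlt _ h)
    · exact Or.inr ⟨i, ⟨by omega, i.2⟩, rfl⟩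
  have h0 : 0 ∈ codes d k N := by simp [codes, hN]
  have : vectorSpan ℝ (enc d '' (codes d k N : Set ℕ)) = ⊤ := by
    rw [eq_top_iff, ← (Pi.basisFun ℝ (Fin d)).span_eq, Submodule.span_le]
    rintro _ ⟨i, rfl⟩
    have h := vsub_mem_vectorSpan ℝ (Set.mem_image_of_mem (enc d) (Finset.mem_coe.2 (hmem i)))
      (Set.mem_image_of_mem (enc d) (Finset.mem_coe.2 h0))
    rw [SetLike.mem_coe]
    convert h using 1
    funext j
    simp only [Pi.basisFun_apply, vsub_eq_sub, Pi.sub_apply, enc, Nat.zero_testBit,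
      Nat.testBit_two_pow, Pi.single_apply, Fin.ext_iff]
    by_cases hij : (j : ℕ) = i
    · simp [hij]
    · simp [hij, Ne.symm hij]
  rw [this, finrank_top, Module.finrank_fin_fun]

/-- Every edge joins an irreducible pair of the initial segment or contains an apex. -/
lemma card_edges_codes {d k N n : ℕ} (hkd : k ≤ d) (hN : N ≤ 2 ^ k) (hn : N + (d - k) = n) :
    Set.ncard {F : Set (Fin d → ℝ) | IsFaceOf (convexHull ℝ (enc d '' (codes d k N : Set ℕ))) F ∧
      adim F = 1} ≤ (d + 4) * n := by
  classical
  set A := (Ico k d).image (fun j => 2 ^ j) with hA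
  have hsub : {F : Set (Fin d → ℝ) | IsFaceOf (convexHull ℝ (enc d '' (codes d k N : Set ℕ))) F ∧
      adim F = 1} ⊆ (((irrPairs N ∪ codes d k N ×ˢ A).image
        (fun x => segment ℝ (enc d x.1) (enc d x.2)) : Finset (Set (Fin d → ℝ))) :
        Set (Set (Fin d → ℝ))) := by
    rintro F ⟨hF, hF1⟩
    obtain ⟨p, hp, q, hq, hI, rfl⟩ := edge_classify (codes_lt hkd hN) hF hF1
    rw [Finset.mem_coe, mem_image]
    refine ⟨(p, q), ?_, rfl⟩
    rw [mem_union]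
    have hq' := hq
    rw [codes, mem_union] at hq'
    rcases hq' with hq' | hq'
    · left
      have hpN : p < N := hI.1.trans (mem_range.1 hq')
      simp only [irrPairs, mem_filter, mem_product]
      exact ⟨⟨mem_range.2 hpN, hq'⟩, hI.1, fun p' hp' q' hq' =>
        hI.2 p' (mem_union_left _ hp') q' (mem_union_left _ hq')⟩
    · right
      exact mem_product.2 ⟨hp, hq'⟩
  have h1 := Set.ncard_le_ncard hsub (Finset.finite_toSet _)
  rw [Set.ncard_coe_finset] at h1
  have h2 := h1.trans (card_image_le.trans (card_union_le _ _))
  rw [card_product, card_codes hN] at h2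
  have h3 := card_irrPairs k N hN
  have h4 : A.card ≤ d - k := card_image_le.trans (by rw [Nat.card_Ico])
  have h5 : (N + (d - k)) * A.card ≤ n * (d - k) := by
    rw [hn]; exact Nat.mul_le_mul_left _ h4
  have h6 : k * N ≤ k * n := Nat.mul_le_mul_left _ (by omega)
  have h7 : k * n + n * (d - k) = d * n := by
    rw [mul_comm n, ← add_mul]
    congr 1
    omega
  have h8 : (d + 4) * n = d * n + 4 * n := by ring
  omega

/-- Distinct pairs of vertices in the cut give distinct edges, the ends being told apart by
membership in `S`. -/
lemma card_le_cut_edges {d : ℕ} {C : Finset ℕ} (hC : ∀ p ∈ C, p < 2 ^ d)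
    (S : Set (Fin d → ℝ)) (D : Finset (ℕ × ℕ))
    (hD : ∀ x ∈ D, x.1 ∈ C ∧ x.2 ∈ C ∧ enc d x.1 ∈ S ∧ enc d x.2 ∉ S ∧
      IsFaceOf (convexHull ℝ (enc d '' (C : Set ℕ))) (segment ℝ (enc d x.1) (enc d x.2))) :
    D.card ≤ Set.ncard {e : Set (Fin d → ℝ) | ∃ a b : Fin d → ℝ,
          e = segment ℝ a b ∧ IsFaceOf (convexHull ℝ (enc d '' (C : Set ℕ))) e ∧ adim e = 1 ∧
          ((a ∈ S ∧ b ∉ S) ∨ (a ∉ S ∧ b ∈ S))} := by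
  classical
  have hinj : Set.InjOn (fun x : ℕ × ℕ => segment ℝ (enc d x.1) (enc d x.2)) D := by
    rintro ⟨p, q⟩ hx ⟨p', q'⟩ hy h
    simp only at h
    obtain ⟨a1, a2, a3, a4, -⟩ := hD _ hx
    obtain ⟨b1, b2, b3, b4, -⟩ := hD _ hy
    simp only at a1 a2 a3 a4 b1 b2 b3 b4
    have hp : enc d p ∈ segment ℝ (enc d p') (enc d q') := h ▸ left_mem_segment ℝ _ _
    have hq : enc d q ∈ segment ℝ (enc d p') (enc d q') := h ▸ right_mem_segment ℝ _ _
    have hp1 : enc d p = enc d p' :=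
      (zeroOne_mem_segment (enc_mem _ _) (enc_mem _ _) (enc_mem _ _) hp).resolve_right
        (fun h => b4 (h ▸ a3))
    have hq1 : enc d q = enc d q' :=
      (zeroOne_mem_segment (enc_mem _ _) (enc_mem _ _) (enc_mem _ _) hq).resolve_left
        (fun h => a4 (h ▸ b3))
    rw [enc_inj (hC _ a1) (hC _ b1) hp1, enc_inj (hC _ a2) (hC _ b2) hq1]
  rw [← Finset.card_image_of_injOn hinj, ← Set.ncard_coe_finset]
  apply Set.ncard_le_ncard
  · intro e he
    rw [Finset.mem_coe, mem_image] at he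
    obtain ⟨x, hx, rfl⟩ := he
    obtain ⟨_, _, a3, a4, hf⟩ := hD x hx
    exact ⟨_, _, rfl, hf, adim_segment (fun h => a4 (h ▸ a3)), Or.inl ⟨a3, a4⟩⟩
  · apply ((C ×ˢ C).image
      (fun x => segment ℝ (enc d x.1) (enc d x.2))).finite_toSet.subset
    rintro e ⟨a, b, _, hf, h1, _⟩
    obtain ⟨p, hp, q, hq, _, rfl⟩ := edge_classify hC hf h1
    rw [Finset.mem_coe, mem_image]
    exact ⟨(p, q), mem_product.2 ⟨hp, hq⟩, rfl⟩

/-- With at least one pyramid apex, the apex is adjacent to all other vertices, and its edges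
alone give the expansion; without one, the cube edges do. -/
lemma expansion_codes {d k N n : ℕ} (hkd : k ≤ d) (hN : N ≤ 2 ^ k) (hn : N + (d - k) = n)
    (T : Finset ℕ) (hT : T ⊆ codes d k N) (hTn : 2 * T.card ≤ n) :
    ∃ D : Finset (ℕ × ℕ), T.card ≤ D.card ∧ ∀ x ∈ D, x.1 ∈ T ∧ x.2 ∈ codes d k N ∧ x.2 ∉ T ∧
      IsFaceOf (convexHull ℝ (enc d '' (codes d k N : Set ℕ)))
        (segment ℝ (enc d x.1) (enc d x.2)) := by
  classical
  have hV : enc d '' (codes d k N : Set ℕ) ⊆ ZeroOne d := by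
    rintro _ ⟨p, _, rfl⟩
    exact enc_mem d p
  have hcard := card_codes (d := d) hN
  rw [hn] at hcard
  rcases hkd.eq_or_lt with rfl | hlt
  · have hCr : codes k k N = range N := by simp [codes]
    rw [hCr] at hT hV ⊢
    refine ⟨cut N T, ?_, ?_⟩
    · have := min_le_card_cut N T hT
      omega
    · rintro ⟨p, q⟩ hx
      simp only [cut, mem_filter, mem_product, mem_sdiff] at hx
      obtain ⟨⟨hp, hq, hqT⟩, i, hi⟩ := hx
      refine ⟨hp, hq, hqT, ?_⟩
      have hpr := hT hp
      have hik : i < k := by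
        by_contra hcon
        have hle : N ≤ 2 ^ i := hN.trans (Nat.pow_le_pow_right (by norm_num) (by omega))
        have := hi i
        rw [Nat.testBit_lt_two_pow ((mem_range.1 hpr).trans_le hle),
          Nat.testBit_lt_two_pow ((mem_range.1 hq).trans_le hle)] at this
        exact this.1 rfl rfl
      refine edge_face hV ⟨p, hpr, rfl⟩ ⟨q, hq, rfl⟩ ⟨i, hik⟩ ?_ (Or.inl ?_)
      · intro h
        exact ((hi i).1 ((enc_apply_eq_iff q p _).1 h).symm) rfl
      · intro j hj
        exact (enc_apply_eq_iff q p _).2 ((hi j).2 (fun h => hj (Fin.ext h))).symm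
  · set z := 2 ^ (d - 1) with hz
    have hzC : z ∈ codes d k N :=
      mem_union_right _ (mem_image.2 ⟨d - 1, mem_Ico.2 ⟨by omega, by omega⟩, rfl⟩)
    have hbit : ∀ p ∈ codes d k N, p ≠ z → p.testBit (d - 1) = false := by
      intro p hp hpz
      apply Nat.testBit_lt_two_pow
      simp only [codes, mem_union, mem_range, mem_image, mem_Ico] at hp
      rcases hp with h | ⟨j, ⟨_, h⟩, rfl⟩
      · exact h.trans_le (hN.trans (Nat.pow_le_pow_right (by norm_num) (by omega)))
      · have : j ≠ d - 1 := fun h => hpz (by rw [h])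
        exact Nat.pow_lt_pow_right (by norm_num) (by omega)
    have hzbit : z.testBit (d - 1) = true := by simp [hz]
    have hface : ∀ p ∈ codes d k N, p ≠ z →
        IsFaceOf (convexHull ℝ (enc d '' (codes d k N : Set ℕ)))
          (segment ℝ (enc d p) (enc d z)) := by
      intro p hp hpz
      have hpb := hbit p hp hpz
      refine edge_face hV ⟨p, hp, rfl⟩ ⟨z, hzC, rfl⟩ ⟨d - 1, by omega⟩ ?_ (Or.inr ?_)
      · rw [Ne, enc_apply_eq_iff]
        simp [hpb, hzbit]
      · rintro _ ⟨x, hx, rfl⟩ hne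
        rw [Ne, enc_apply_eq_iff] at hne
        by_cases hxz : x = z
        · rw [hxz]
        · exact absurd ((hbit x hx hxz).trans hpb.symm) hne
    by_cases hzT : z ∈ T
    · refine ⟨(codes d k N \ T).image (fun q => (z, q)), ?_, ?_⟩
      · rw [card_image_of_injective _ (fun a b h => by simpa using h),
          card_sdiff_of_subset hT]
        omega
      · intro x hx
        rw [mem_image] at hx
        obtain ⟨q, hq, rfl⟩ := hx
        rw [mem_sdiff] at hq
        refine ⟨hzT, hq.1, hq.2, ?_⟩
        rw [segment_symm]
        exact hface q hq.1 (fun h => hq.2 (h ▸ hzT))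
    · refine ⟨T.image (fun p => (p, z)), ?_, ?_⟩
      · rw [card_image_of_injective _ (fun a b h => by simpa using h)]
      · intro x hx
        rw [mem_image] at hx
        obtain ⟨p, hp, rfl⟩ := hx
        exact ⟨hp, hzC, hzT, hface p (hT hp) (fun h => hzT (h ▸ hp))⟩

/-- for `d + 1 ≤ n ≤ 2^d` there is a `d`-dimensional 0/1-polytope
in ℝ^d with exactly `n` vertices, at most `(d+4)·n` edges, and edge expansion
at least one. -/
theorem stmt19 (d n : ℕ) (hd : 0 < d) (hn : 0 < n)
    (h1 : d + 1 ≤ n) (h2 : n ≤ 2 ^ d) :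
    ∃ V : Set (Fin d → ℝ), V ⊆ ZeroOne d ∧
      adim (convexHull ℝ V) = d ∧
      ((convexHull ℝ V).extremePoints ℝ).ncard = n ∧
      Set.ncard {F : Set (Fin d → ℝ) |
          IsFaceOf (convexHull ℝ V) F ∧ adim F = 1} ≤ (d + 4) * n ∧
      ∀ S : Set (Fin d → ℝ), S ⊆ (convexHull ℝ V).extremePoints ℝ →
        0 < S.ncard → 2 * S.ncard ≤ n →
        S.ncard ≤ Set.ncard {e : Set (Fin d → ℝ) | ∃ a b : Fin d → ℝ,
          e = segment ℝ a b ∧ IsFaceOf (convexHull ℝ V) e ∧ adim e = 1 ∧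
          ((a ∈ S ∧ b ∉ S) ∨ (a ∉ S ∧ b ∈ S))} := by
  classical
  obtain ⟨k, N, hkd, hNn, hN0, hN, hlt⟩ := exists_params h1 h2
  have hC := codes_lt (d := d) hkd hN
  have hV : enc d '' (codes d k N : Set ℕ) ⊆ ZeroOne d := by
    rintro _ ⟨p, _, rfl⟩
    exact enc_mem d p
  have hinj : Set.InjOn (enc d) (codes d k N : Set ℕ) :=
    fun p hp q hq h => enc_inj (hC p hp) (hC q hq) h
  refine ⟨enc d '' (codes d k N : Set ℕ), hV, adim_codes hN0 hlt, ?_,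
    card_edges_codes hkd hN hNn, ?_⟩
  · rw [extremePoints_eq hV, hinj.ncard_image, Set.ncard_coe_finset, card_codes hN,
      hNn]
  · intro S hS _ hS2
    rw [extremePoints_eq hV] at hS
    set T := (codes d k N).filter (fun p => enc d p ∈ S) with hT
    have hTS : enc d '' (T : Set ℕ) = S := by
      ext x
      constructor
      · rintro ⟨p, hp, rfl⟩
        exact (mem_filter.1 hp).2
      · intro hx
        obtain ⟨p, hp, rfl⟩ := hS hx
        exact ⟨p, mem_filter.2 ⟨hp, hx⟩, rfl⟩
    have hTC : T ⊆ codes d k N := filter_subset _ _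
    have hcard : S.ncard = T.card := by
      rw [← hTS, (hinj.mono (Finset.coe_subset.2 hTC)).ncard_image,
        Set.ncard_coe_finset]
    rw [hcard] at hS2 ⊢
    obtain ⟨D, hD, hDp⟩ := expansion_codes hkd hN hNn T hTC hS2
    refine hD.trans (card_le_cut_edges hC S D fun x hx => ?_)
    obtain ⟨a1, a2, a3, a4⟩ := hDp x hx
    exact ⟨hTC a1, a2, (mem_filter.1 a1).2, fun h => a3 (mem_filter.2 ⟨a2, h⟩), a4⟩
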